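/- Suppose L · P_π = P_π · L_π, A·C = C·Q₁, and B·K·(L_π)_{ij}·C = C·Q'_{ij} for all i, j ∈ Fin s (i.e., the matrix Q of Lemma 2 exists), and suppose every leader is a singleton cell. Then the controllable subspace satisfies W ⊆ range(P̃.mulVecLin), the column space of P̃. -/

import Mathlib

open Matrix

/-- Characteristic matrix of a partition `c : Fin n → Fin s`. -/
noncomputable def charM (n s d : ℕ) (c : Fin n → Fin s) :
    Matrix (Fin n × Fin d) (Fin s × Fin d) ℝ :=
  fun ia jb => if c ia.1 = jb.1 ∧ ia.2 = jb.2 then 1 else 0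

/-- Block diagonal matrix with `n` copies of `X` on the diagonal. -/
noncomputable def bdiag (n : ℕ) {d q : ℕ} (X : Matrix (Fin d) (Fin q) ℝ) :
    Matrix (Fin n × Fin d) (Fin n × Fin q) ℝ :=
  fun ia jb => if ia.1 = jb.1 then X ia.2 jb.2 else 0

/-- The `(i,j)` block of a block matrix. -/
noncomputable def blockOf {n s d e : ℕ} (L : Matrix (Fin n × Fin d) (Fin s × Fin e) ℝ)
    (i : Fin n) (j : Fin s) : Matrix (Fin d) (Fin e) ℝ :=
  fun a b => L (i, a) (j, b)

/-- Input matrix `M̃` with block `C` at position `(l,l)` for each leader `l ∈ Fin m`. -/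
noncomputable def inputM (n m d q : ℕ) (h : m ≤ n) (C : Matrix (Fin d) (Fin q) ℝ) :
    Matrix (Fin n × Fin d) (Fin m × Fin q) ℝ :=
  fun ia lb => if ia.1 = Fin.castLE h lb.1 then C ia.2 lb.2 else 0

theorem charM_mul_apply {n s d : ℕ} {ι : Type*} (c : Fin n → Fin s)
    (X : Matrix (Fin s × Fin d) ι ℝ) (i : Fin n) (a : Fin d) (y : ι) :
    (charM n s d c * X) (i, a) y = X (c i, a) y := by
  rw [Matrix.mul_apply, Finset.sum_eq_single (c i, a)]
  · simp [charM]
  · rintro ⟨j, b⟩ - hb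
    have : ¬ (c i = j ∧ a = b) := by
      rintro ⟨rfl, rfl⟩
      exact hb rfl
    simp [charM, this]
  · simp

theorem bdiag_mul_apply {n d q : ℕ} {ι : Type*} (X : Matrix (Fin d) (Fin q) ℝ)
    (Y : Matrix (Fin n × Fin q) ι ℝ) (i : Fin n) (a : Fin d) (y : ι) :
    (bdiag n X * Y) (i, a) y = ∑ b, X a b * Y (i, b) y := by
  rw [Matrix.mul_apply, Fintype.sum_prod_type, Finset.sum_eq_single i]
  · simp [bdiag]
  · intro j _ hj
    simp [bdiag, hj.symm]
  · simp

theorem mul_bdiag_apply {n d q : ℕ} {ι : Type*} (X : Matrix (Fin d) (Fin q) ℝ)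
    (Y : Matrix ι (Fin n × Fin d) ℝ) (i : Fin n) (a : Fin q) (y : ι) :
    (Y * bdiag n X) y (i, a) = ∑ b, Y y (i, b) * X b a := by
  rw [Matrix.mul_apply, Fintype.sum_prod_type, Finset.sum_eq_single i]
  · simp [bdiag]
  · intro j _ hj
    simp [bdiag, hj]
  · simp

theorem bdiag_charM {n s d : ℕ} (c : Fin n → Fin s) (X : Matrix (Fin d) (Fin d) ℝ) :
    bdiag n X * charM n s d c = charM n s d c * bdiag s X := by
  ext ⟨i, a⟩ ⟨j, b⟩
  rw [charM_mul_apply, bdiag_mul_apply]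
  by_cases h : c i = j <;> simp [charM, bdiag, h]

theorem bdiag_mul_bdiag {n d e q : ℕ} (X : Matrix (Fin d) (Fin e) ℝ)
    (Y : Matrix (Fin e) (Fin q) ℝ) : bdiag n X * bdiag n Y = bdiag n (X * Y) := by
  ext ⟨i, a⟩ ⟨j, b⟩
  rw [bdiag_mul_apply]
  by_cases h : i = j <;> simp [bdiag, h, Matrix.mul_apply]

def glueM {s q : ℕ} (Q' : Fin s → Fin s → Matrix (Fin q) (Fin q) ℝ) :
    Matrix (Fin s × Fin q) (Fin s × Fin q) ℝ := fun x y => Q' x.1 y.1 x.2 y.2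

theorem bdiag_Lpi {s d q : ℕ} (X : Matrix (Fin d) (Fin d) ℝ) (C : Matrix (Fin d) (Fin q) ℝ)
    (Lπ : Matrix (Fin s × Fin d) (Fin s × Fin d) ℝ)
    (Q' : Fin s → Fin s → Matrix (Fin q) (Fin q) ℝ)
    (hQ' : ∀ i j, X * blockOf Lπ i j * C = C * Q' i j) :
    bdiag s X * Lπ * bdiag s C = bdiag s C * glueM Q' := by
  ext ⟨i, a⟩ ⟨j, b⟩
  rw [mul_bdiag_apply, bdiag_mul_apply]
  simp only [bdiag_mul_apply]
  have := congrFun (congrFun (hQ' i j) a) b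
  simpa [Matrix.mul_apply, blockOf, glueM] using this

theorem inputM_eq {n s d q m : ℕ} (hm : m ≤ n) (c : Fin n → Fin s)
    (C : Matrix (Fin d) (Fin q) ℝ)
    (hlead : ∀ l : Fin m, ∀ t : Fin n,
      c t = c (Fin.castLE hm l) → t = Fin.castLE hm l) :
    inputM n m d q hm C = charM n s d c * bdiag s C *
      Matrix.of (fun (x : Fin s × Fin q) (y : Fin m × Fin q) =>
        if x.1 = c (Fin.castLE hm y.1) ∧ x.2 = y.2 then (1 : ℝ) else 0) := by
  ext ⟨i, a⟩ ⟨l, b⟩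
  rw [Matrix.mul_assoc, charM_mul_apply, bdiag_mul_apply]
  by_cases h : i = Fin.castLE hm l
  · simp [inputM, h]
  · have h' : ¬ c i = c (Fin.castLE hm l) := fun e => h (hlead l i e)
    simp [inputM, h, h']

/-- Theorem 1: under the intertwining conditions, the controllable subspace of
`(L̃, M̃)` is contained in the column space of `P̃`. -/
theorem theorem1_controllable_subspace {n s d p q m : ℕ} (hm : m ≤ n)
    (c : Fin n → Fin s) (hc : Function.Surjective c)
    (A : Matrix (Fin d) (Fin d) ℝ) (B : Matrix (Fin d) (Fin p) ℝ)
    (K : Matrix (Fin p) (Fin d) ℝ) (C : Matrix (Fin d) (Fin q) ℝ)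
    (L : Matrix (Fin n × Fin d) (Fin n × Fin d) ℝ)
    (Lπ : Matrix (Fin s × Fin d) (Fin s × Fin d) ℝ)
    (hLP : L * charM n s d c = charM n s d c * Lπ)
    (Q₁ : Matrix (Fin q) (Fin q) ℝ)
    (hQ₁ : A * C = C * Q₁)
    (Q' : Fin s → Fin s → Matrix (Fin q) (Fin q) ℝ)
    (hQ' : ∀ i j, B * K * blockOf Lπ i j * C = C * Q' i j)
    (hlead : ∀ l : Fin m, ∀ t : Fin n,
      c t = c (Fin.castLE hm l) → t = Fin.castLE hm l) :
    (⨆ k ∈ Finset.range (n * d),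
        LinearMap.range
          (((bdiag n A - bdiag n (B * K) * L) ^ k * inputM n m d q hm C).mulVecLin))
      ≤ LinearMap.range (charM n s d c * bdiag s C).mulVecLin := by
  set P := charM n s d c * bdiag s C with hP
  have hinv : ∃ Q : Matrix (Fin s × Fin q) (Fin s × Fin q) ℝ, (bdiag n A - bdiag n (B * K) * L) * P = P * Q := by
    refine ⟨bdiag s Q₁ - glueM Q', ?_⟩
    have h1 : bdiag n A * P = P * bdiag s Q₁ := by
      rw [hP, ← Matrix.mul_assoc, bdiag_charM, Matrix.mul_assoc, bdiag_mul_bdiag, hQ₁,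
        ← bdiag_mul_bdiag, Matrix.mul_assoc]
    have h2 : bdiag n (B * K) * L * P =
        P * glueM Q' := by
      rw [hP, Matrix.mul_assoc (charM n s d c), ← bdiag_Lpi (B * K) C Lπ Q' hQ',
        ← Matrix.mul_assoc, Matrix.mul_assoc _ L, hLP, ← Matrix.mul_assoc, bdiag_charM]
      simp only [Matrix.mul_assoc]
    rw [Matrix.sub_mul, Matrix.mul_sub, h1, h2]
  obtain ⟨Q, hQ⟩ := hinv
  have hpow : ∀ k : ℕ, (bdiag n A - bdiag n (B * K) * L) ^ k * P = P * Q ^ k := by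
    intro k
    induction k with
    | zero => simp
    | succ k ih => rw [pow_succ, Matrix.mul_assoc, hQ, ← Matrix.mul_assoc, ih,
        Matrix.mul_assoc, pow_succ]
  refine iSup₂_le fun k _ => ?_
  rw [inputM_eq hm c C hlead, ← hP, ← Matrix.mul_assoc, hpow, Matrix.mul_assoc,
    Matrix.mulVecLin_mul]
  exact LinearMap.range_comp_le_range _ _
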